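/- arXiv:1709.06351 — 3 statements merged into one kernel-verified Lean document; each statement's English description precedes it below -/
import Mathlib

section
/- Let A be a complex n×n matrix admitting a factorization A = L D U^H, where L and U are unit lower triangular matrices (lower triangular with all diagonal entries equal to 1) and D is an invertible diagonal matrix. Set Z = U^{-H}, a unit upper triangular matrix. Then for every k ∈ {1,…,n} the leading principal k×k submatrix A_k of A is invertible, and for all i ≤ k the entries of Z satisfy Z_{ik} = D_{kk} · (A_k^{-1})_{ik}. -/
open Matrix

/-!
Write `Z = (Uᴴ)⁻¹`. Since `Uᴴ` is unit upper triangular, so is its inverse, and the factorization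
reads `A * Z = L * D`. Right multiplication by an upper triangular matrix is compatible with
taking leading principal blocks, hence `A_k * Z_k = (L * D)_k`. The right-hand side is lower
triangular with the nonzero diagonal entries of `D`, so `A_k` is invertible. The last column of
`(L * D)_k` is `D k k` times the last basis vector because `L` is unit lower triangular, and
multiplying by `A_k⁻¹` identifies the last column of `Z_k`.
-/

/-- Leading principal blocks of a product, when the right factor is upper triangular. -/
theorem submatrix_castLE_mul {m n : ℕ} (h : m ≤ n) (X Y : Matrix (Fin n) (Fin n) ℂ)
    (hY : ∀ i j : Fin n, j < i → Y i j = 0) :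
    (X * Y).submatrix (Fin.castLE h) (Fin.castLE h) =
      X.submatrix (Fin.castLE h) (Fin.castLE h) * Y.submatrix (Fin.castLE h) (Fin.castLE h) := by
  ext i j
  simp only [submatrix_apply, mul_apply]
  symm
  refine Fintype.sum_of_injective (Fin.castLE h) (Fin.castLE_injective h) _ _ ?_ (fun _ => rfl)
  intro x hx
  have hmx : m ≤ x.val := by
    by_contra! hlt
    exact hx ⟨⟨x.val, hlt⟩, rfl⟩
  rw [hY x (Fin.castLE h j) (Fin.lt_def.mpr (lt_of_lt_of_le j.isLt hmx)), mul_zero]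

theorem stmt1 {n : ℕ} (A L U D : Matrix (Fin n) (Fin n) ℂ)
    (hLlow : ∀ i j : Fin n, i < j → L i j = 0) (hLdiag : ∀ i : Fin n, L i i = 1)
    (hUlow : ∀ i j : Fin n, i < j → U i j = 0) (hUdiag : ∀ i : Fin n, U i i = 1)
    (hDdiag : D.IsDiag) (hDinv : IsUnit D.det)
    (hfact : A = L * D * Uᴴ) :
    ∀ k : Fin n,
      IsUnit (A.submatrix (Fin.castLE k.isLt) (Fin.castLE k.isLt)).det ∧
        ∀ i : Fin (k.val + 1),
          (Uᴴ)⁻¹ (Fin.castLE k.isLt i) k =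
            D k k *
              (A.submatrix (Fin.castLE k.isLt) (Fin.castLE k.isLt))⁻¹ i (Fin.last k.val) := by
  have hUup : (Uᴴ).BlockTriangular id := fun i j hij => by
    simp [conjTranspose_apply, hUlow j i hij]
  have hUdet : (Uᴴ).det = 1 := by
    rw [det_of_isUpperTriangular hUup]
    simp [conjTranspose_apply, hUdiag]
  have hUunit : IsUnit (Uᴴ).det := by simp [hUdet]
  have hZ : ((Uᴴ)⁻¹).BlockTriangular id := by
    have := invertibleOfIsUnitDet _ hUunit
    exact blockTriangular_inv_of_blockTriangular hUup
  have hAZ : A * (Uᴴ)⁻¹ = L * D := by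
    rw [hfact, mul_nonsing_inv_cancel_right _ _ hUunit]
  have hLD : ∀ i j, (L * D) i j = L i j * D j j := fun i j => by
    rw [← hDdiag.diagonal_diag, mul_diagonal, diagonal_apply_eq]
  have hD : ∀ i, D i i ≠ 0 := by
    rw [← hDdiag.diagonal_diag, det_diagonal, isUnit_iff_ne_zero, Finset.prod_ne_zero_iff] at hDinv
    exact fun i => hDinv i (Finset.mem_univ i)
  intro k
  have hblock := submatrix_castLE_mul k.isLt A (Uᴴ)⁻¹ (fun i j hij => hZ hij)
  rw [hAZ] at hblock
  have hdet : ((L * D).submatrix (Fin.castLE k.isLt) (Fin.castLE k.isLt)).det ≠ 0 := by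
    rw [det_of_isLowerTriangular]
    · refine Finset.prod_ne_zero_iff.mpr fun i _ => ?_
      rw [submatrix_apply, hLD, hLdiag, one_mul]
      exact hD _
    · intro i j hij
      have hij' : Fin.castLE k.isLt i < Fin.castLE k.isLt j := hij
      rw [submatrix_apply, hLD, hLlow _ _ hij', zero_mul]
  have hA : IsUnit (A.submatrix (Fin.castLE k.isLt) (Fin.castLE k.isLt)).det := by
    rw [hblock, det_mul] at hdet
    exact isUnit_iff_ne_zero.mpr (left_ne_zero_of_mul hdet)
  refine ⟨hA, fun i => ?_⟩
  have hlast : Fin.castLE k.isLt (Fin.last k.val) = k := rfl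
  have hZk : ((Uᴴ)⁻¹).submatrix (Fin.castLE k.isLt) (Fin.castLE k.isLt) =
      (A.submatrix (Fin.castLE k.isLt) (Fin.castLE k.isLt))⁻¹ *
        (L * D).submatrix (Fin.castLE k.isLt) (Fin.castLE k.isLt) := by
    rw [hblock, nonsing_inv_mul_cancel_left _ _ hA]
  have hentry := congrFun (congrFun hZk i) (Fin.last k.val)
  rw [submatrix_apply, hlast, mul_apply, Finset.sum_eq_single (Fin.last k.val)] at hentry
  · rw [hentry, submatrix_apply, hlast, hLD, hLdiag, one_mul, mul_comm]
  · intro j _ hj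
    have hjk : Fin.castLE k.isLt j < k := Fin.lt_last_iff_ne_last.mpr hj
    rw [submatrix_apply, hlast, hLD, hLlow _ _ hjk, zero_mul, mul_zero]
  · exact fun h => absurd (Finset.mem_univ _) h
end

section
/- Let A, Z, W, D be complex n×n matrices with A, Z, W, D invertible, and suppose −A^{-1} = Z D^{-1} W^H. Let ξ ∈ ℂ and set E = W^H Z. If the matrix D + ξ E is invertible, then ξ I − A is invertible and (ξ I − A)^{-1} = Z (D + ξ E)^{-1} W^H, where I is the n×n identity matrix. -/
open Matrix

theorem stmt5 {n : ℕ} (A Z W D : Matrix (Fin n) (Fin n) ℂ)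
    (hA : IsUnit A.det) (hZ : IsUnit Z.det) (hW : IsUnit W.det) (hD : IsUnit D.det)
    (hfact : -A⁻¹ = Z * D⁻¹ * Wᴴ) (ξ : ℂ)
    (hE : IsUnit (D + ξ • (Wᴴ * Z)).det) :
    IsUnit (ξ • (1 : Matrix (Fin n) (Fin n) ℂ) - A).det ∧
      (ξ • (1 : Matrix (Fin n) (Fin n) ℂ) - A)⁻¹ = Z * (D + ξ • (Wᴴ * Z))⁻¹ * Wᴴ := by
  -- The factorization amounts to `Wᴴ A Z = -D`: a one-sided inverse of a square matrix is
  -- two-sided, so `Wᴴ` may be moved cyclically from the right end of a product to the left.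
  have h1 : (-(A * Z * D⁻¹)) * Wᴴ = 1 := by
    have h : A * (Z * D⁻¹ * Wᴴ) = -1 := by
      rw [← hfact, mul_neg, mul_nonsing_inv A hA]
    rw [neg_mul, mul_assoc, mul_assoc, ← mul_assoc Z, h, neg_neg]
  have h2 : Wᴴ * A * Z = -D := by
    have h := congrArg (fun X => X * D) (mul_eq_one_comm.mp h1)
    simp only [mul_neg, neg_mul, one_mul, mul_assoc, nonsing_inv_mul D hD, mul_one] at h
    rw [mul_assoc, ← h, neg_neg]
  -- Hence `Wᴴ (ξ I - A) Z = D + ξ Wᴴ Z`, and the same cyclic move gives the inverse.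
  have h3 : Wᴴ * ((ξ • (1 : Matrix (Fin n) (Fin n) ℂ) - A) * Z) = D + ξ • (Wᴴ * Z) := by
    rw [sub_mul, mul_sub, ← mul_assoc Wᴴ A, h2, smul_mul_assoc, one_mul, mul_smul_comm,
      sub_neg_eq_add, add_comm]
  have h4 : (ξ • (1 : Matrix (Fin n) (Fin n) ℂ) - A) *
      (Z * (D + ξ • (Wᴴ * Z))⁻¹ * Wᴴ) = 1 := by
    have h := mul_nonsing_inv _ hE
    nth_rewrite 1 [← h3] at h
    rw [mul_assoc] at h
    simpa only [mul_assoc] using mul_eq_one_comm.mp h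
  exact ⟨isUnit_det_of_right_inverse h4, inv_eq_right_inv h4⟩
end

section
/- Let N be a positive integer and let α₁,…,α_N ∈ ℝ and β₁,…,β_N ∈ [0,1). Define e_k = (−1)^{k+1}/k − Σ_{j=1}^N α_j (−β_j)^{k−1} for k ≥ 1, i.e. the Maclaurin coefficients of h(x) = log(1+x) − Σ_{j=1}^N α_j x/(1+β_j x), and suppose (−1)^{k+1} e_k ≥ 0 for all k ≥ 1. Then for every complex n×n matrix A with ‖A‖₂ < 1, each matrix I + β_j A is invertible, the series L(A) = Σ_{k≥1} (−1)^{k+1} A^k / k converges, and ‖L(A) − Σ_{j=1}^N α_j A (I + β_j A)^{-1}‖₂ ≤ | Σ_{j=1}^N α_j (−‖A‖₂)/(1 − β_j ‖A‖₂) − log(1 − ‖A‖₂) |. -/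
/-!
The spectral norm makes the complex matrices a Banach algebra, and for `‖A‖ < 1` both `log (I + A)`
and each `A (I + β_j A)⁻¹` are sums of absolutely convergent power series in `A`
(`summable_log_series`, `exists_inv_hasSum`). Their combination is `∑ e_k A ^ k`, whose norm is at
most `∑ |e_k| ‖A‖ ^ k` (`norm_le_of_hasSum_pow`). Because `e_k` has the sign of `(-1) ^ (k + 1)`, the
latter series equals `-∑ e_k (-‖A‖) ^ k`, which is the scalar error `r(-‖A‖) - log (1 - ‖A‖)`
(`hasSum_scalar_error`); in particular that error is nonnegative. Series are indexed from `k = 0`,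
with `k` standing for the power `k + 1`.
-/

open Matrix

/-- The spectral norm (operator 2-norm) of a complex matrix. -/
noncomputable def sNorm {n : ℕ} (A : Matrix (Fin n) (Fin n) ℂ) : ℝ :=
  ‖Matrix.toEuclideanCLM (𝕜 := ℂ) A‖

/-- A scalar in the unit disc times an element of the open unit ball: `1 + b a` is inverted by the
geometric series in `-b a`; multiplying that series by `a` expands `a (1 + b a)⁻¹` in powers
of `a`. -/
theorem exists_inv_hasSum {R : Type*} [NormedRing R] [NormedAlgebra ℂ R] [CompleteSpace R]
    (a : R) (ha : ‖a‖ < 1) (b : ℂ) (hb : ‖b‖ < 1) :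
    ∃ u : R, (1 + b • a) * u = 1 ∧ HasSum (fun k : ℕ => (-b) ^ k • a ^ (k + 1)) (a * u) := by
  have hx : ‖-(b • a)‖ < 1 := by
    rw [norm_neg, norm_smul]
    nlinarith [norm_nonneg a, norm_nonneg b]
  refine ⟨∑' k : ℕ, (-(b • a)) ^ k, ?_, ?_⟩
  · simpa using mul_neg_geom_series _ hx
  · have h := (summable_geometric_of_norm_lt_one hx).hasSum.mul_left a
    refine h.congr_fun fun k => ?_
    rw [← neg_smul, smul_pow, mul_smul_comm, pow_succ']

/-- Comparison of a power series without constant term at `a` with the same series, with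
coefficients replaced by their absolute values, at `‖a‖`. -/
theorem norm_le_of_hasSum_pow {R : Type*} [NormedRing R] [NormedAlgebra ℂ R]
    {a s : R} {c d : ℕ → ℝ} {t : ℝ} (hcd : ∀ k, |c k| = d k)
    (hs : HasSum (fun k : ℕ => (c k : ℂ) • a ^ (k + 1)) s)
    (ht : HasSum (fun k : ℕ => d k * ‖a‖ ^ (k + 1)) t) : ‖s‖ ≤ t := by
  refine hs.norm_le_of_bounded ht fun k => ?_
  rw [norm_smul, Complex.norm_real, Real.norm_eq_abs, hcd]
  have : 0 ≤ d k := hcd k ▸ abs_nonneg _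
  gcongr
  exact norm_pow_le' a k.succ_pos

theorem summable_log_series {R : Type*} [NormedRing R] [NormedAlgebra ℂ R] [CompleteSpace R]
    (a : R) (ha : ‖a‖ < 1) :
    Summable fun k : ℕ => (((-1 : ℝ) ^ k / ((k : ℝ) + 1) : ℝ) : ℂ) • a ^ (k + 1) := by
  refine Summable.of_norm_bounded (Real.hasSum_pow_div_log_of_abs_lt_one
    (x := ‖a‖) (by rwa [abs_norm])).summable fun k => ?_
  have hk : (0 : ℝ) < (k : ℝ) + 1 := by positivity
  rw [norm_smul, Complex.norm_real, Real.norm_eq_abs, abs_div, abs_pow, abs_neg, abs_one, one_pow,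
    abs_of_pos hk, one_div, inv_mul_eq_div]
  gcongr
  exact norm_pow_le' a k.succ_pos

/-- The expansion of `r(-x) - log (1 - x)` in powers of `x`; the coefficient of `x ^ (k + 1)` is
`(-1) ^ k` times the Maclaurin coefficient of order `k + 1` of `log (1 + x) - r(x)`. -/
theorem hasSum_scalar_error {N : ℕ} (α β : Fin N → ℝ) (hβ : ∀ j, β j ∈ Set.Ico (0 : ℝ) 1)
    {x : ℝ} (hx0 : 0 ≤ x) (hx : x < 1) :
    HasSum (fun k : ℕ => ((-1 : ℝ) ^ k * ((-1 : ℝ) ^ k / ((k : ℝ) + 1)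
        - ∑ j, α j * (-β j) ^ k)) * x ^ (k + 1))
      ((∑ j, α j * (-x) / (1 - β j * x)) - Real.log (1 - x)) := by
  have h1 := Real.hasSum_pow_div_log_of_abs_lt_one (x := x) (by rwa [abs_of_nonneg hx0])
  have h2 : ∀ j ∈ Finset.univ, HasSum (fun k : ℕ => α j * (-x) * (β j * x) ^ k)
      (α j * (-x) / (1 - β j * x)) := fun j _ => by
    rw [div_eq_mul_inv]
    refine (hasSum_geometric_of_lt_one (mul_nonneg (hβ j).1 hx0) ?_).mul_left _
    nlinarith [(hβ j).1, (hβ j).2]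
  have h := (hasSum_sum h2).add h1
  rw [sub_eq_add_neg]
  convert h using 2 with k
  have e : (-1 : ℝ) ^ k * (-1) ^ k = 1 := by rw [← mul_pow]; norm_num
  have e2 : ∀ j, (-1 : ℝ) ^ k * (α j * (-β j) ^ k) = α j * β j ^ k := fun j => by
    rw [neg_pow (β j), mul_left_comm, ← mul_assoc ((-1 : ℝ) ^ k), e, one_mul]
  rw [mul_sub, mul_div_assoc', e, Finset.mul_sum, sub_mul, Finset.sum_mul]
  simp only [e2]
  rw [sub_eq_add_neg, add_comm, ← Finset.sum_neg_distrib]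
  congr 1
  · refine Finset.sum_congr rfl fun j _ => ?_
    ring
  · ring

theorem stmt10 {n N : ℕ} (hN : 0 < N) (α β : Fin N → ℝ)
    (hβ : ∀ j, β j ∈ Set.Ico (0 : ℝ) 1)
    (hsign : ∀ k : ℕ, 1 ≤ k →
      0 ≤ (-1 : ℝ) ^ (k + 1) *
        ((-1 : ℝ) ^ (k + 1) / (k : ℝ) - ∑ j, α j * (-β j) ^ (k - 1)))
    (A : Matrix (Fin n) (Fin n) ℂ) (hA : sNorm A < 1) :
    (∀ j, IsUnit ((1 : Matrix (Fin n) (Fin n) ℂ) + (β j : ℂ) • A).det) ∧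
    (Summable fun k : ℕ => ((-1 : ℝ) ^ k / ((k : ℝ) + 1)) • A ^ (k + 1)) ∧
    sNorm ((∑' k : ℕ, ((-1 : ℝ) ^ k / ((k : ℝ) + 1)) • A ^ (k + 1)) -
        ∑ j, α j • (A * ((1 : Matrix (Fin n) (Fin n) ℂ) + (β j : ℂ) • A)⁻¹)) ≤
      |(∑ j, α j * (-sNorm A) / (1 - β j * sNorm A)) - Real.log (1 - sNorm A)| := by
  open scoped Matrix.Norms.L2Operator in
  -- `sNorm` is by definition the scoped L2 operator norm, whose topology is the entrywise one
  -- used by the series in the statement.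
  have hA' : ‖A‖ < 1 := hA
  have : CompleteSpace (Matrix (Fin n) (Fin n) ℂ) := FiniteDimensional.complete ℂ _
  have hb : ∀ j, ‖(β j : ℂ)‖ < 1 := fun j => by
    rw [Complex.norm_real, Real.norm_eq_abs, abs_of_nonneg (hβ j).1]
    exact (hβ j).2
  have hlog := summable_log_series A hA'
  simp only [Complex.coe_smul] at hlog
  choose u hu hsum using fun j => exists_inv_hasSum A hA' (β j : ℂ) (hb j)
  refine ⟨fun j => ?_, hlog, ?_⟩
  · exact (Matrix.isUnit_iff_isUnit_det _).1 (IsUnit.of_mul_eq_one _ (hu j))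
  -- The scalar error bounds a norm even without the absolute value.
  refine le_trans ?_ (le_abs_self _)
  have hinv : ∀ j, ((1 : Matrix (Fin n) (Fin n) ℂ) + (β j : ℂ) • A)⁻¹ = u j :=
    fun j => Matrix.inv_eq_right_inv (hu j)
  simp only [hinv]
  refine norm_le_of_hasSum_pow (a := A)
    (c := fun k => (-1 : ℝ) ^ k / ((k : ℝ) + 1) - ∑ j, α j * (-β j) ^ k) ?_ ?_
    (hasSum_scalar_error α β hβ (norm_nonneg A) hA')
  · intro k
    have h := hsign (k + 1) (Nat.le_add_left 1 k)
    simp only [Nat.add_sub_cancel, pow_succ, mul_neg, mul_one, neg_neg, Nat.cast_add,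
      Nat.cast_one] at h
    rw [← abs_of_nonneg h, abs_mul, abs_pow, abs_neg, abs_one, one_pow, one_mul]
  · have hr := hasSum_sum fun j (_ : j ∈ Finset.univ) => (hsum j).const_smul (α j : ℂ)
    simp only [Complex.coe_smul] at hr
    refine (hlog.hasSum.sub hr).congr_fun fun k => ?_
    rw [Complex.coe_smul, sub_smul, Finset.sum_smul]
    congr 1
    refine Finset.sum_congr rfl fun j _ => ?_
    rw [mul_smul, ← Complex.coe_smul ((-β j) ^ k)]
    push_cast
    rfl
end
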